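/- Let G = N_{3,4}, let f : H → G be a homomorphism from a finite-index subgroup H of G, let m, n, k, j be positive integers with aᵐ, bⁿ, cᵏ, dʲ ∈ H, let K = ⟨aᵐ, bⁿ, cᵏ, dʲ⟩, and let N_f be the associated 4×4 integer exponent matrix. If det(N_f) = 0, then there exists a nontrivial subgroup W of K that is normal in G and contained in the kernel of f. -/

import Mathlib

/-!
Write `G = N_{3,4}`. The relations imply that `G` is nilpotent of class three
(`weight_three_central`, `N34_structure`, `N34_cmt_mem_center`), hence `(x, g, h) ↦ [[x, g], h]` is
trilinear with central values and vanishes when `x` lies in the commutator subgroup.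

Since `det Nf = 0`, there is a nonzero integer row vector `e` with `e Nf = 0`. Put
`x = (aᵐ)^e₀ (bⁿ)^e₁ (cᵏ)^e₂ (dʲ)^e₃ ∈ K`. Then `f x` lies in the commutator subgroup, so that
for `g ∈ K` the element `[[x, g], g]` of `K` is central in `G` and is sent by `f` to `[[f x, f g], f g] = 1`. If it is
nontrivial, it generates a subgroup `W` as required (`N34_witness`).

It is enough to use `g = cᵏ` and `g = aᵐ`. With `z = [a, b]`, `s = [c, d]`, `v = [a, [a, d]]`,
trilinearity and the relations give
`[[x, cᵏ], cᵏ] = (z^(m e₀) v^(n e₁))^(k²)` and `[[x, aᵐ], aᵐ] = (s^(k e₂) v^(j e₃))^(m²)`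
(`N34_tri_c`, `N34_tri_a`). Three unipotent integral representations of `G`, each of which detects
exactly one of `z`, `s`, `v` (`N34_hom_z`, `N34_hom_s`, `N34_hom_v`), show that these elements are
both trivial only for `e = 0`.
-/

/-- The commutator `[x, y] = x⁻¹ y⁻¹ x y`. -/
def cmt {G : Type*} [Group G] (x y : G) : G := x⁻¹ * y⁻¹ * x * y

/-- The defining relators of the Bludov–Gusev group `N_{3,4}` on generators
`a, b, c, d` (indexed by `0, 1, 2, 3`). -/
def N34Rels : Set (FreeGroup (Fin 4)) :=
  let a : FreeGroup (Fin 4) := FreeGroup.of 0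
  let b : FreeGroup (Fin 4) := FreeGroup.of 1
  let c : FreeGroup (Fin 4) := FreeGroup.of 2
  let d : FreeGroup (Fin 4) := FreeGroup.of 3
  {cmt a (cmt a b), cmt (cmt a b) b, cmt a (cmt c d), cmt (cmt a d) d,
   cmt b (cmt b c), cmt b (cmt c d), cmt c (cmt c d), cmt (cmt c d) d,
   cmt a (cmt b c) * cmt (cmt a c) b,
   cmt a (cmt b d) * cmt (cmt a d) b,
   cmt a (cmt a d) * (cmt (cmt b c) c)⁻¹,
   cmt a (cmt a c) * (cmt b (cmt b d))⁻¹,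
   cmt (cmt a c) b * (cmt (cmt b d) d)⁻¹,
   cmt (cmt a c) c * (cmt (cmt b d) c)⁻¹,
   cmt (cmt a d) b * (cmt (cmt a d) c)⁻¹,
   cmt a b * (cmt (cmt a c) c)⁻¹,
   cmt c d * (cmt a (cmt a c))⁻¹}

/-- The Bludov–Gusev group `N_{3,4}`, presented on generators `a, b, c, d`. -/
abbrev N34 : Type := PresentedGroup N34Rels

/-- The generator `a` of `N_{3,4}`. -/
def ga : N34 := PresentedGroup.of 0
/-- The generator `b` of `N_{3,4}`. -/
def gb : N34 := PresentedGroup.of 1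
/-- The generator `c` of `N_{3,4}`. -/
def gc : N34 := PresentedGroup.of 2
/-- The generator `d` of `N_{3,4}`. -/
def gd : N34 := PresentedGroup.of 3

/-! ### Consequences of the defining relations -/

set_option linter.unusedSimpArgs false
/-- The conjugate `x^g = g⁻¹ x g`. -/
def cj {G : Type*} [Group G] (x g : G) : G := g⁻¹ * x * g

section

variable {G : Type*} [Group G]

theorem cj_mul (x y g : G) : cj (x * y) g = cj x g * cj y g := by simp [cj, mul_assoc]

theorem cj_inv (x g : G) : cj x⁻¹ g = (cj x g)⁻¹ := by simp [cj, mul_assoc]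

theorem cj_mul_right (x g h : G) : cj x (g * h) = cj (cj x g) h := by simp [cj, mul_assoc]

theorem cj_self (x : G) : cj x x = x := by simp [cj]

theorem cj_eq_self_iff {x g : G} : cj x g = x ↔ Commute x g := by
  rw [cj, mul_assoc, inv_mul_eq_iff_eq_mul, commute_iff_eq]

/-- Conjugating the relation `x^g = X` by `k`. This turns each relation into a consistency
condition once the conjugates of `x`, `g` and `X` by `k` are known. -/
theorem cj_rel {x g X : G} (h : cj x g = X) (k : G) : cj (cj x k) (cj g k) = cj X k := by
  subst h; simp [cj, mul_assoc]

theorem cj_inv_right_eq {x g y : G} : cj x g⁻¹ = y ↔ x = cj y g := by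
  constructor <;> rintro rfl <;> simp [cj, mul_assoc]

theorem commute_cj_iff {x y : G} (g : G) : Commute (cj x g) (cj y g) ↔ Commute x y := by
  simp [commute_iff_eq, ← cj_mul]; simp [cj]

theorem comm_cancel_left {x y t : G} (h : Commute (x * y) t) (hx : Commute x t) :
    Commute y t := by
  simpa using hx.inv_left.mul_left h

theorem comm_cancel_right {x y t : G} (h : Commute (x * y) t) (hy : Commute y t) :
    Commute x t := by
  simpa using h.mul_left hy.inv_left

/-- If `[x, g] = X`, then `[g, x] = X⁻¹`. -/
theorem cj_swap {x g X : G} (h : cj x g = x * X) : cj g x = g * X⁻¹ := by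
  rw [← inv_mul_eq_iff_eq_mul] at h
  rw [← h]; simp [cj, mul_assoc]

theorem cj1 {x g : G} (h : Commute x g) : cj x g = x := cj_eq_self_iff.2 h

theorem cj2 {x g : G} (h : Commute g x) : cj x g = x := cj_eq_self_iff.2 h.symm

theorem cj3 {x g : G} (h : Commute x g) : cj x g⁻¹ = x := cj_eq_self_iff.2 h.inv_right

theorem cj4 {x g : G} (h : Commute g x) : cj x g⁻¹ = x := cj_eq_self_iff.2 h.symm.inv_right

theorem commute_cj {x y : G} (h : Commute x y) (g : G) : Commute (cj x g) (cj y g) :=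
  (commute_cj_iff g).2 h

/-- The relations of `N_{3,4}` force the weight-three commutators to be central. Here
`P, Q, R, T` are `[a, c]`, `[a, d]`, `[b, c]`, `[b, d]`, and `s, z, y, u, v` are `[c, d]`, `[a, b]`,
`[[a, c], b]`, `[[a, d], b]`, `[a, [a, d]]`; the relations are written as formulas for conjugates,
and the centrality of `s`, which the presentation gives at once, is taken as a hypothesis.

The method is that of consistency checks for a polycyclic presentation: a known formula for `x^g`
is conjugated by a third generator `k`, and expressing both sides of `(x^k)^(g^k) = (x^g)^k` through
the formulas already known leaves one new commutation. The order of the steps matters, since each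
of them relies on the commutations found before it. The conjugates `P^d` and `R^d`, about which the
presentation says nothing directly, are also determined. -/
theorem weight_three_central (a b c d P Q R T s z y u v : G) (hs : ∀ x, Commute s x)
    (hab : cj a b = a * z) (hac : cj a c = a * P) (had : cj a d = a * Q)
    (hbc : cj b c = b * R) (hbd : cj b d = b * T) (hcd : cj c d = c * s)
    (hza : Commute z a) (hzb : Commute z b)
    (hPa : cj P a = P * s⁻¹) (hPb : cj P b = P * y) (hPc : cj P c = P * z)
    (hQa : cj Q a = Q * v⁻¹) (hQb : cj Q b = Q * u) (hQc : cj Q c = Q * u) (hQd : Commute Q d)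
    (hRa : cj R a = R * y) (hRb : Commute R b) (hRc : cj R c = R * v)
    (hTa : cj T a = T * u) (hTb : cj T b = T * s⁻¹) (hTc : cj T c = T * z) (hTd : cj T d = T * y) :
    (Commute z c ∧ Commute z d) ∧ (Commute y a ∧ Commute y b ∧ Commute y c ∧ Commute y d) ∧
    (Commute u a ∧ Commute u b ∧ Commute u c ∧ Commute u d) ∧
    (Commute v a ∧ Commute v b ∧ Commute v c ∧ Commute v d) ∧
    cj P d = P * u ∧ cj R d = z * R := by
  have hba := cj_swap hab
  have hca := cj_swap hac
  have hda := cj_swap had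
  have hcb := cj_swap hbc
  have hdb := cj_swap hbd
  have hdc := cj_swap hcd
  have cs : ∀ g, cj s g = s := fun g => cj_eq_self_iff.2 (hs g)
  have s2 : ∀ x y, x * s⁻¹ * y = x * y * s⁻¹ := fun x y => by
    rw [mul_assoc, (hs y).inv_left.eq, mul_assoc]
  have sr : ∀ g, cj g s = g := fun g => cj_eq_self_iff.2 (hs g).symm
  have za := cj_eq_self_iff.2 hza
  have zb := cj_eq_self_iff.2 hzb
  have Qd := cj_eq_self_iff.2 hQd
  have Rb := cj_eq_self_iff.2 hRb
  -- Conjugation of `P^a = P s⁻¹` and of `T^b = T s⁻¹` by `c`.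
  have hzP : Commute z P := by
    have h := cj_rel hPa c
    simp only [cj_mul, cj_inv, cj_mul_right, cj_self, s2, *, mul_left_inj, mul_right_inj] at h
    exact cj_eq_self_iff.1 h
  have hTzR : Commute (T * z) R := by
    have h := cj_rel hTb c
    simp only [cj_mul, cj_inv, cj_mul_right, s2, *, mul_left_inj] at h
    rw [← cj_mul] at h
    exact cj_eq_self_iff.1 h
  -- The conjugates `R^d` and `P^d`, from `b^c = b R` and `a^c = a P` conjugated by `d`.
  -- The second still involves `P^Q` until `P` and `Q` are known to commute.
  have Rd : cj R d = z * R := by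
    have h := cj_rel hbc d
    simp only [cj_mul, cj_mul_right, *] at h
    have h2 := hTzR.eq
    simp only [mul_assoc, mul_right_inj] at h h2
    rw [← h2] at h
    simpa using h.symm
  have Pd0 : cj P d = cj P Q * u := by
    have h := cj_rel hac d
    simp only [cj_mul, cj_mul_right, *] at h
    simp only [mul_assoc, mul_right_inj] at h
    rw [← inv_mul_eq_iff_eq_mul] at h
    rw [← h]; simp [cj, mul_assoc]
  have hzRT : Commute (z * R) T := by
    have h := commute_cj hRb d
    rw [Rd, hbd] at h
    exact (comm_cancel_left h.symm (hzb.mul_left hRb).symm).symm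
  -- From here to `hub`: `u` commutes with `d`, `T`, `z`, `y`, `Q` and finally with `b`, by
  -- conjugating the commutations of `Q` with `d` and `T`.
  have hQud : Commute (Q * u) d := by
    have h := commute_cj hQd c
    rw [hQc, hdc] at h
    exact (comm_cancel_right h.symm (hs _).inv_left).symm
  have hud : Commute u d := comm_cancel_left hQud hQd
  have ud := cj_eq_self_iff.2 hud
  have hQT : Commute Q T := by
    refine (comm_cancel_left (x := d) (Commute.symm ?_) hQd.symm).symm
    rw [← commute_cj_iff b, cj_mul, hQb, hdb, hTb]
    simpa using hQud.mul_right (hs _).symm.inv_right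
  have hQuT : Commute (Q * u) T := by
    have h := commute_cj hQd b
    rw [hQb, hdb] at h
    simpa using (comm_cancel_left h.symm hQud.symm).symm
  have huT : Commute u T := comm_cancel_left hQuT hQT
  have hQy : Commute Q y := by
    have h := commute_cj hQT d
    rw [Qd, hTd] at h
    exact (comm_cancel_left h.symm hQT.symm).symm
  have hQuz : Commute (Q * u) z := by
    have h := commute_cj hQT c
    rw [hQc, hTc] at h
    exact (comm_cancel_left h.symm hQuT.symm).symm
  have huz : Commute u z := by
    rw [← commute_cj_iff b, zb]
    have h := commute_cj hQuz b
    rw [cj_mul, zb, hQb] at h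
    exact comm_cancel_left h hQuz
  have hQz : Commute Q z := comm_cancel_right hQuz huz
  have hvz : Commute v z := by
    have h := commute_cj hQz a
    rw [hQa, za] at h
    simpa using comm_cancel_left h hQz
  have huy : Commute u y := by
    have h := commute_cj huT d
    rw [ud, hTd] at h
    exact (comm_cancel_left h.symm huT.symm).symm
  have hubT : Commute (cj u b) T := by
    have h := commute_cj huT b
    rw [hTb] at h
    exact (comm_cancel_right h.symm (hs _).inv_left).symm
  have hzy : Commute z y := by
    have h := commute_cj hzP b
    rw [zb, hPb] at h
    exact (comm_cancel_left h.symm hzP.symm).symm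
  have hya : Commute y a := by
    have h := cj_rel hPb a
    simp only [cj_mul, cj_inv, cj_mul_right, cj1, cj2, cj3, cj4, *, mul_right_inj,
      mul_left_inj] at h
    exact cj_eq_self_iff.1 h.symm
  have ya := cj_eq_self_iff.2 hya
  have huQ : Commute u Q := by
    have h := cj_rel hTd a
    simp only [cj_mul, *, cj_mul_right, cj1, cj2, cj3, cj4] at h
    rw [mul_assoc, mul_assoc, mul_right_inj, huy.eq, mul_right_inj, cj_inv_right_eq] at h
    exact cj_eq_self_iff.1 h.symm
  have hubz : Commute (cj u b) z := by
    simpa only [zb] using commute_cj huz b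
  have Tz0 : cj T z * u = T * cj u b := by
    have h := cj_rel hTb a
    simp only [cj_mul, *, cj_mul_right, cj_inv, cj1, cj2, cj3, cj4, mul_left_inj] at h
    have h := congrArg (fun x => cj x z) h
    simp only [cj_mul, cj1 huz, cj1 hubz, cj_inv_right_eq] at h
    rw [← h]
    simp [cj, mul_assoc]
  -- The defects of commutation of `T` and of `d` with `z` are both `u⁻¹ u^b`; conjugating `d^z`
  -- by `b` shows that this defect is trivial.
  have dz0 : cj d z = d * (u⁻¹ * Q⁻¹ * cj u b * Q) := by
    have h := cj_rel hda b
    simp only [cj_mul, *, cj_mul_right, cj1, cj2, cj3, cj4, cj_inv] at h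
    rw [mul_assoc d, ← mul_inv_rev (Q * u), hQuT.eq] at h
    simp only [mul_inv_rev, ← mul_assoc, mul_left_inj] at h
    simp [← mul_assoc, ← h]
  have hQub : Commute Q (cj u b) := by
    have h := commute_cj hQz d
    rw [Qd] at h
    have h1 : Commute Q (u⁻¹ * Q⁻¹ * cj u b * Q) := by
      rw [← inv_mul_eq_iff_eq_mul] at dz0
      rw [← dz0]
      have : d⁻¹ * cj d z = (cj z d)⁻¹ * z := by simp [cj, mul_assoc]
      rw [this]
      exact h.inv_right.mul_right hQz
    have h2 := comm_cancel_right h1.symm (Commute.refl Q)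
    exact (comm_cancel_left h2 (huQ.inv_left.mul_left (Commute.refl Q).inv_left)).symm
  have huub : Commute u (cj u b) := by
    have h := commute_cj huQ.symm b
    rw [hQb] at h
    exact comm_cancel_left h hQub
  have dz : cj d z = d * (u⁻¹ * cj u b) := by
    rw [dz0, mul_assoc _ _ Q, ← hQub.eq]; simp [mul_assoc]
  have Tz : cj T z = T * (u⁻¹ * cj u b) := by
    rw [(huub.inv_left).eq, ← mul_assoc, ← Tz0]; simp
  have hub : Commute u b := by
    have hwT : Commute (u⁻¹ * cj u b) T := huT.inv_left.mul_left hubT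
    have h := cj_rel dz b
    rw [hdb, zb, cj_mul, cj_inv, dz, Tz, cj_mul d, hdb] at h
    generalize hw : u⁻¹ * cj u b = w at *
    have h2 : cj w b = 1 := by
      simpa [mul_assoc] using h.symm
    rw [cj, mul_assoc, inv_mul_eq_one, right_eq_mul, ← hw, inv_mul_eq_one] at h2
    exact cj_eq_self_iff.1 h2.symm
  have ub := cj1 hub
  simp only [ub, inv_mul_cancel, mul_one] at Tz dz
  have hTz : Commute T z := cj_eq_self_iff.1 Tz
  have hdz : Commute d z := cj_eq_self_iff.1 dz
  have hRT : Commute R T := comm_cancel_left hzRT hTz.symm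
  have hRz : Commute z R := comm_cancel_left hTzR hRT.symm
  -- The centrality of `z` and most commutations of `y`.
  have hyb : Commute y b := by
    have h := cj_rel hRa b
    simp only [cj_mul, *, cj_mul_right, cj1, cj2, cj3, cj4, cj_inv, mul_right_inj] at h
    exact cj_eq_self_iff.1 h.symm
  have hyT : Commute y T := by
    have h := cj_rel hTb d
    simp only [cj_mul, *, cj_mul_right, cj1, cj2, cj3, cj4, cj_inv, mul_right_inj, cj_self,
      mul_left_inj] at h
    simpa [cj_eq_self_iff] using h
  have hyc : Commute y c := by
    have h := cj_rel hTc d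
    simp only [cj_mul, *, cj_mul_right, cj1, cj2] at h
    rw [mul_assoc, mul_assoc, mul_right_inj, ← hzy.eq, mul_right_inj] at h
    exact cj_eq_self_iff.1 h
  have hPR : Commute P R := by
    have h := cj_rel hPc b
    rw [hPb, hcb, cj_mul_right, cj_mul P y, hPc, cj1 hyc, cj_mul P z, hPb, zb, mul_assoc P, hzy.eq,
      ← mul_assoc] at h
    have h := cj_eq_self_iff.1 h
    have h := (comm_cancel_right h hRz.inv_right).inv_right
    rw [inv_inv, ← hPb, ← Rb, commute_cj_iff] at h
    exact h
  have hRy : Commute R y := by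
    have h := commute_cj hPR b
    rw [hPb, Rb] at h
    exact (comm_cancel_left h hPR).symm
  have hPy : Commute P y := by
    have h := commute_cj hPR a
    rw [hPa, hRa] at h
    have h := comm_cancel_right h (hs _).inv_left
    exact (comm_cancel_left h.symm hPR.symm).symm
  have hcz : Commute c z := by
    have h := cj_rel hca b
    simp only [cj_mul, *, cj_mul_right, cj1, cj2, cj3, cj4, cj_inv] at h
    rw [mul_assoc, mul_assoc, ← mul_inv_rev, ← mul_inv_rev, (hPR.symm.mul_left hPy.symm).eq,
      hRy.eq, ← mul_assoc, hPy.eq, mul_assoc, mul_left_inj] at h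
    exact cj_eq_self_iff.1 h
  -- The commutations of `v`.
  have hRu : Commute R u := by
    have h := commute_cj hRT a
    rw [hRa, hTa] at h
    have h1 := comm_cancel_right h (hyT.mul_right huy.symm)
    exact (comm_cancel_left h1.symm hRT.symm).symm
  have hvT : Commute v T := by
    have h := commute_cj hRT c
    rw [hRc, hTc] at h
    have h := comm_cancel_right h.symm (hRz.mul_right hvz.symm)
    exact comm_cancel_left h.symm hRT
  have hvP : Commute v P := by
    have h := commute_cj hPR c
    rw [hRc, hPc] at h
    have h := comm_cancel_right h (hRz.mul_right hvz.symm)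
    exact comm_cancel_left h.symm hPR.symm
  have hvy : Commute v y := by
    have h := commute_cj hRy c
    rw [hRc, cj1 hyc] at h
    exact comm_cancel_left h hRy
  have hva : Commute v a := by
    have h := cj_rel hRc a
    simp only [cj_mul, *, cj_mul_right, cj1, cj2, cj3, cj4, cj_inv] at h
    rw [mul_assoc, mul_assoc, mul_right_inj, hvy.eq, mul_right_inj] at h
    exact cj_eq_self_iff.1 h.symm
  have hvu : Commute v u := by
    have h := commute_cj hvT a
    rw [cj1 hva, hTa] at h
    exact (comm_cancel_left h.symm hvT.symm).symm
  have vd0 : cj v d = cj v Q := by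
    have h := cj_rel hQa d
    simp only [cj_mul, *, cj_mul_right, cj1, cj2, cj_inv, cj_self] at h
    simpa using h.symm
  have hvQ : Commute v Q := by
    have h := commute_cj hva d
    have h1 : a * Q = cj (Q * a) Q := by simp [cj, mul_assoc]
    rw [vd0, had, h1, commute_cj_iff] at h
    exact (comm_cancel_right h.symm hva.symm).symm
  have hvd : Commute v d := by
    rw [cj1 hvQ] at vd0
    exact cj_eq_self_iff.1 vd0
  -- That `y` commutes with `d` is not available yet, so `Y = y^d` is carried as a separate element
  -- in order to show that `v` commutes with `R`.
  obtain ⟨Y, hY⟩ : ∃ Y, cj y d = Y := ⟨_, rfl⟩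
  have hQY : Commute Q Y := by
    have h := commute_cj hQy d
    rwa [Qd, hY] at h
  have hYa : Commute Y a := by
    have h := commute_cj hya d
    rw [hY, had] at h
    exact (comm_cancel_right h.symm hQY).symm
  have hYR : Commute Y R := by
    have h := commute_cj hRy d
    rw [Rd, hY] at h
    have h1 : Commute z Y := by
      have := commute_cj hzy d
      rwa [cj2 hdz, hY] at this
    exact (comm_cancel_left h h1).symm
  have hYy : Commute Y y := by
    have h : Commute Y (a⁻¹ * R * a) := (hYa.inv_right.mul_right hYR).mul_right hYa
    change Commute Y (cj R a) at h
    rw [hRa] at h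
    exact (comm_cancel_left h.symm hYR.symm).symm
  have hvY : Commute v Y := by
    have h := commute_cj hvy d
    rwa [cj1 hvd, hY] at h
  have RQ : cj R Q = R * (Y * y⁻¹) := by
    have h := cj_rel hRa d
    simp only [cj_mul, *, cj_mul_right, cj1, cj2, cj_inv, cj_self] at h
    simp only [mul_assoc, mul_right_inj] at h
    rw [← mul_assoc]; exact eq_mul_inv_of_mul_eq h
  have hvR : Commute v R := by
    have QR := cj_swap RQ
    generalize hg : Y * y⁻¹ = g at QR
    have hga : Commute g⁻¹ a := by rw [← hg]; exact (hYa.mul_left hya.inv_left).inv_left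
    have hgy : Commute g⁻¹ y := by
      rw [← hg]; exact (hYy.mul_left (Commute.refl y).inv_left).inv_left
    have hgv : Commute v⁻¹ g⁻¹ := by
      rw [← hg]; exact (hvY.mul_right hvy.inv_right).inv_inv
    have h := cj_rel hQa R
    rw [QR, cj_swap hRa, cj_mul_right, cj_mul Q, hQa, cj1 hga,
      cj3 ((hQy.mul_left hvy.inv_left).mul_left hgy), cj_mul, cj_inv, QR, mul_assoc, mul_assoc,
      mul_right_inj, hgv.eq, mul_right_inj, inv_inj] at h
    exact cj_eq_self_iff.1 h.symm
  have hvb : Commute v b := by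
    have h := commute_cj hRb c
    rw [hRc, hbc] at h
    have h1 := comm_cancel_left h (hRb.mul_right (Commute.refl R))
    exact (comm_cancel_right h1.symm hvR.symm).symm
  -- The remaining commutations.
  have hua : Commute u a := by
    have h := cj_rel hQb a
    simp only [cj_mul, *, cj_mul_right, cj1, cj2, cj3, cj4, cj_inv, cj_self] at h
    rw [mul_assoc, mul_assoc, mul_right_inj, ← hvu.inv_left.eq, mul_right_inj] at h
    exact cj_eq_self_iff.1 h.symm
  have hPQ : Commute P Q := by
    have h := cj_rel hPa d
    simp only [cj_mul, *, cj_mul_right, cj1, cj2, cj3, cj4, cj_inv, cj_self] at h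
    have h2 := cj_rel (rfl : cj P Q = cj P Q) a
    have h3 : Commute v (cj P Q) := by simpa only [cj1 hvQ] using commute_cj hvP Q
    rw [hPa, hQa, cj_mul_right, cj_mul, cj_mul, cj4 h3, cj_inv, cj_inv, cs, cs] at h2
    rw [← h2, cj_mul, cj_inv, cs, s2, mul_left_inj, mul_left_inj] at h
    have h := cj_eq_self_iff.1 h
    have h4 := (commute_cj_iff (x := P) (y := Q) Q).1
    rw [cj_self] at h4
    exact h4 h
  have Pd : cj P d = P * u := by rw [Pd0, cj1 hPQ]
  have hPu : Commute P u := by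
    have h := commute_cj hPQ b
    rw [hPb, hQb] at h
    have h := comm_cancel_right h (hQy.symm.mul_right huy.symm)
    exact (comm_cancel_left h.symm hPQ.symm).symm
  have hvc : Commute v c := by
    have h := cj_rel hQa c
    simp only [cj_mul, *, cj_mul_right, cj1, cj2, cj3, cj4, cj_inv, cj_self] at h
    rw [mul_assoc, mul_assoc, mul_right_inj, hvu.inv_left.eq, mul_right_inj, inv_inj] at h
    exact cj_eq_self_iff.1 h.symm
  have huc : Commute u c := by
    have h0 : Commute (P * T⁻¹) c := by
      rw [← cj_eq_self_iff, cj_mul, cj_inv, hPc, hTc]; simp [mul_assoc]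
    have h := commute_cj h0 d
    rw [cj_mul, cj_inv, Pd, hTd, hcd] at h
    have e : P * u * (T * y)⁻¹ = P * T⁻¹ * (u * y⁻¹) := by
      rw [mul_inv_rev, mul_assoc, ← mul_assoc u, (huT.mul_left hyT.inv_left).inv_right.eq,
        mul_assoc]
    rw [e] at h
    have h := comm_cancel_right h.symm (hs _)
    exact comm_cancel_right (comm_cancel_left h.symm h0) hyc.inv_left
  have hTP : Commute T P := by
    have h := cj_rel hTc a
    simp only [cj_mul, *, cj_mul_right, cj1, cj2, cj3, cj4, cj_inv, cj_self] at h
    rw [mul_assoc, mul_assoc, huz.eq, mul_left_inj] at h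
    simpa using (cj_eq_self_iff.1 h).inv_right
  have hyd : Commute y d := by
    have h := cj_rel hPb d
    simp only [cj_mul, *, cj_mul_right, cj1, cj2, cj3, cj4, cj_inv, cj_self] at h
    rw [mul_assoc, mul_assoc, mul_right_inj, ← huy.eq, mul_right_inj] at h
    exact cj_eq_self_iff.1 (hY.trans h.symm)
  exact ⟨⟨hcz.symm, hdz.symm⟩, ⟨hya, hyb, hyc, hyd⟩, ⟨hua, hub, huc, hud⟩,
    ⟨hva, hvb, hvc, hvd⟩, Pd, Rd⟩

end

/-! ### The class of `N_{3,4}` -/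

theorem cj_eq_mul_cmt {G : Type*} [Group G] (x g : G) : cj x g = x * cmt x g := by
  simp [cj, cmt, mul_assoc]

theorem cmt_inv {G : Type*} [Group G] (x g : G) : (cmt x g)⁻¹ = cmt g x := by
  simp [cmt, mul_assoc]

theorem cmt_eq_one_iff {G : Type*} [Group G] {x g : G} : cmt x g = 1 ↔ Commute x g := by
  rw [← cj_eq_self_iff, cj_eq_mul_cmt, mul_eq_left]

/-- Commuting with the image of a homomorphism from `N_{3,4}` may be checked on generators. -/
theorem N34_hom_commute {M : Type*} [Group M] (φ : N34 →* M) {x : M}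
    (ha : Commute x (φ ga)) (hb : Commute x (φ gb)) (hc : Commute x (φ gc))
    (hd : Commute x (φ gd)) (g : N34) : Commute x (φ g) := by
  have h : Subgroup.closure (Set.range (PresentedGroup.of : Fin 4 → N34)) ≤
      (Subgroup.centralizer {x}).comap φ := by
    rw [Subgroup.closure_le]
    rintro _ ⟨i, rfl⟩
    simp only [SetLike.mem_coe, Subgroup.mem_comap, Subgroup.mem_centralizer_singleton_iff]
    fin_cases i
    exacts [ha.eq.symm, hb.eq.symm, hc.eq.symm, hd.eq.symm]
  rw [PresentedGroup.closure_range_of] at h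
  exact (Subgroup.mem_centralizer_singleton_iff.1 (h (Subgroup.mem_top g))).symm

theorem N34_mem_center {x : N34} (ha : Commute x ga) (hb : Commute x gb) (hc : Commute x gc)
    (hd : Commute x gd) : x ∈ Subgroup.center N34 :=
  Subgroup.mem_center_iff.2 fun g =>
    (N34_hom_commute (MonoidHom.id N34) ha hb hc hd g).eq.symm

/-- All commutators `[x, g]` with `x` a basic commutator of weight two and `g` a generator are
central; moreover `[c, d]` and `[a, b]` are themselves central. The last three clauses are relations
of the presentation that determine the double commutators needed later. -/
theorem N34_structure :
    (cmt gc gd ∈ Subgroup.center N34 ∧ cmt ga gb ∈ Subgroup.center N34) ∧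
    (∀ x ∈ ({cmt ga gc, cmt ga gd, cmt gb gc, cmt gb gd} : Set N34),
      ∀ g ∈ ({ga, gb, gc, gd} : Set N34), cmt x g ∈ Subgroup.center N34) ∧
    cmt (cmt ga gc) gc = cmt ga gb ∧ cmt (cmt gb gc) gc = cmt ga (cmt ga gd) ∧
    cmt ga (cmt ga gc) = cmt gc gd := by
  have hrel : ∀ r ∈ N34Rels, PresentedGroup.mk N34Rels r = 1 := fun r hr =>
    PresentedGroup.one_of_mem hr
  generalize hμ : PresentedGroup.mk N34Rels = μ at hrel
  simp only [N34Rels, Set.mem_insert_iff, Set.mem_singleton_iff, forall_eq_or_imp,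
    forall_eq] at hrel
  subst hμ
  obtain ⟨r1, r2, r3, r4, r5, r6, r7, r8, r9, r10, r11, r12, r13, r14, r15, r16, r17⟩ := hrel
  change cmt ga (cmt ga gb) = 1 at r1
  change cmt (cmt ga gb) gb = 1 at r2
  change cmt ga (cmt gc gd) = 1 at r3
  change cmt (cmt ga gd) gd = 1 at r4
  change cmt gb (cmt gb gc) = 1 at r5
  change cmt gb (cmt gc gd) = 1 at r6
  change cmt gc (cmt gc gd) = 1 at r7
  change cmt (cmt gc gd) gd = 1 at r8
  change cmt ga (cmt gb gc) * cmt (cmt ga gc) gb = 1 at r9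
  change cmt ga (cmt gb gd) * cmt (cmt ga gd) gb = 1 at r10
  change cmt ga (cmt ga gd) * (cmt (cmt gb gc) gc)⁻¹ = 1 at r11
  change cmt ga (cmt ga gc) * (cmt gb (cmt gb gd))⁻¹ = 1 at r12
  change cmt (cmt ga gc) gb * (cmt (cmt gb gd) gd)⁻¹ = 1 at r13
  change cmt (cmt ga gc) gc * (cmt (cmt gb gd) gc)⁻¹ = 1 at r14
  change cmt (cmt ga gd) gb * (cmt (cmt ga gd) gc)⁻¹ = 1 at r15
  change cmt ga gb * (cmt (cmt ga gc) gc)⁻¹ = 1 at r16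
  change cmt gc gd * (cmt ga (cmt ga gc))⁻¹ = 1 at r17
  rw [mul_inv_eq_one] at r11 r12 r13 r14 r15 r16 r17
  rw [mul_eq_one_iff_inv_eq, cmt_inv] at r9 r10
  have hs : cmt gc gd ∈ Subgroup.center N34 :=
    N34_mem_center (cmt_eq_one_iff.1 r3).symm (cmt_eq_one_iff.1 r6).symm
      (cmt_eq_one_iff.1 r7).symm (cmt_eq_one_iff.1 r8)
  obtain ⟨⟨zc, zd⟩, ⟨ya, yb, yc, yd⟩, ⟨ua, ub, uc, ud⟩, ⟨va, vb, vc, vd⟩, Pd, Rd⟩ :=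
    weight_three_central ga gb gc gd (cmt ga gc) (cmt ga gd) (cmt gb gc) (cmt gb gd) (cmt gc gd)
      (cmt ga gb) (cmt (cmt ga gc) gb) (cmt (cmt ga gd) gb) (cmt ga (cmt ga gd))
      (fun x => (Subgroup.mem_center_iff.1 hs x).symm)
      (cj_eq_mul_cmt _ _) (cj_eq_mul_cmt _ _) (cj_eq_mul_cmt _ _) (cj_eq_mul_cmt _ _)
      (cj_eq_mul_cmt _ _) (cj_eq_mul_cmt _ _)
      (cmt_eq_one_iff.1 r1).symm (cmt_eq_one_iff.1 r2)
      (by rw [cj_eq_mul_cmt, r17, cmt_inv]) (cj_eq_mul_cmt _ _) (by rw [cj_eq_mul_cmt, r16])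
      (by rw [cj_eq_mul_cmt, cmt_inv]) (cj_eq_mul_cmt _ _) (by rw [cj_eq_mul_cmt, r15])
      (cmt_eq_one_iff.1 r4)
      (by rw [cj_eq_mul_cmt, r9]) (cmt_eq_one_iff.1 r5).symm (by rw [cj_eq_mul_cmt, r11])
      (by rw [cj_eq_mul_cmt, r10]) (by rw [cj_eq_mul_cmt, r17, r12, cmt_inv])
      (by rw [cj_eq_mul_cmt, r16, r14]) (by rw [cj_eq_mul_cmt, r13])
  have hz := N34_mem_center (cmt_eq_one_iff.1 r1).symm (cmt_eq_one_iff.1 r2) zc zd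
  have hy := N34_mem_center ya yb yc yd
  have hu := N34_mem_center ua ub uc ud
  have hv := N34_mem_center va vb vc vd
  have hPd : cmt (cmt ga gc) gd = cmt (cmt ga gd) gb := by
    rwa [cj_eq_mul_cmt, mul_right_inj] at Pd
  have hRd : cmt (cmt gb gc) gd = cmt ga gb := by
    rwa [cj_eq_mul_cmt, ← Subgroup.mem_center_iff.1 hz, mul_right_inj] at Rd
  have inv_mem : ∀ {x y : N34}, cmt y x ∈ Subgroup.center N34 → cmt x y ∈ Subgroup.center N34 :=
    fun h => by rw [← cmt_inv]; exact inv_mem h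
  have one_mem : ∀ {x y : N34}, cmt x y = 1 → cmt x y ∈ Subgroup.center N34 :=
    fun h => by rw [h]; exact one_mem _
  refine ⟨⟨hs, hz⟩, ?_, r16.symm, r11.symm, r17.symm⟩
  rintro x (rfl | rfl | rfl | rfl) g (rfl | rfl | rfl | rfl)
  · exact inv_mem (r17 ▸ hs)
  · exact hy
  · exact r16 ▸ hz
  · exact hPd ▸ hu
  · exact inv_mem hv
  · exact hu
  · exact r15 ▸ hu
  · exact one_mem r4
  · exact r9 ▸ hy
  · exact inv_mem (one_mem r5)
  · exact r11 ▸ hv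
  · exact hRd ▸ hz
  · exact r10 ▸ hu
  · exact inv_mem (r12 ▸ r17 ▸ hs)
  · exact r14 ▸ r16 ▸ hz
  · exact r13 ▸ hy

/-- `N_{3,4}` has class at most three: `[x, g]` is central for `x` in the commutator subgroup.
Modulo the centre, the commutators of generators are central, so `G` modulo its second centre is abelian. -/
theorem N34_cmt_mem_center {x : N34} (hx : x ∈ commutator N34) (g : N34) :
    cmt x g ∈ Subgroup.center N34 := by
  obtain ⟨⟨hs, hz⟩, h2, -⟩ := N34_structure
  -- Centrality of a commutator is translated into a commutation modulo the centre, and back.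
  set π := QuotientGroup.mk' (Subgroup.center N34) with hπ
  have step : ∀ {x g : N34}, cmt x g ∈ Subgroup.center N34 → Commute (π x) (π g) := by
    intro x g h
    rw [← cmt_eq_one_iff]
    change π (cmt x g) = 1
    rwa [hπ, QuotientGroup.mk'_apply, QuotientGroup.eq_one_iff]
  have step' : ∀ {x g : N34}, Commute (π x) (π g) → cmt x g ∈ Subgroup.center N34 := by
    intro x g h
    rw [← cmt_eq_one_iff] at h
    change π (cmt x g) = 1 at h
    rwa [hπ, QuotientGroup.mk'_apply, QuotientGroup.eq_one_iff] at h
  have hc2 : ∀ x ∈ ({cmt ga gc, cmt ga gd, cmt gb gc, cmt gb gd} : Set N34),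
      π x ∈ Subgroup.center (N34 ⧸ Subgroup.center N34) := by
    intro x hx
    rw [Subgroup.mem_center_iff]
    intro q
    obtain ⟨g, rfl⟩ := QuotientGroup.mk'_surjective _ q
    exact (N34_hom_commute π (step (h2 x hx _ (by simp))) (step (h2 x hx _ (by simp)))
      (step (h2 x hx _ (by simp))) (step (h2 x hx _ (by simp))) g).eq.symm
  have hc1 : ∀ x ∈ Subgroup.center N34, π x ∈ Subgroup.center (N34 ⧸ Subgroup.center N34) := by
    intro x hx
    have : π x = 1 := by rwa [hπ, QuotientGroup.mk'_apply, QuotientGroup.eq_one_iff]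
    rw [this]; exact one_mem _
  set ψ := (QuotientGroup.mk' (Subgroup.center (N34 ⧸ Subgroup.center N34))).comp π with hψ
  have step2 : ∀ {x g : N34}, π (cmt x g) ∈ Subgroup.center (N34 ⧸ Subgroup.center N34) →
      Commute (ψ x) (ψ g) := by
    intro x g h
    rw [← cmt_eq_one_iff]
    change ψ (cmt x g) = 1
    rwa [hψ, MonoidHom.comp_apply, QuotientGroup.mk'_apply, QuotientGroup.eq_one_iff]
  have ab := step2 (hc1 _ hz)
  have cd := step2 (hc1 _ hs)
  have ac := step2 (hc2 (cmt ga gc) (by simp))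
  have ad := step2 (hc2 (cmt ga gd) (by simp))
  have bc := step2 (hc2 (cmt gb gc) (by simp))
  have bd := step2 (hc2 (cmt gb gd) (by simp))
  have hle : commutator N34 ≤ ψ.ker := by
    rw [commutator_def, Subgroup.commutator_le]
    intro p _ q _
    have hq := N34_hom_commute ψ (x := ψ q)
      (N34_hom_commute ψ (Commute.refl _) ab ac ad q).symm
      (N34_hom_commute ψ ab.symm (Commute.refl _) bc bd q).symm
      (N34_hom_commute ψ ac.symm bc.symm (Commute.refl _) cd q).symm
      (N34_hom_commute ψ ad.symm bd.symm cd.symm (Commute.refl _) q).symm p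
    rw [MonoidHom.mem_ker, map_commutatorElement, commutatorElement_eq_one_iff_commute]
    exact hq.symm
  have hx := hle hx
  rw [MonoidHom.mem_ker, hψ, MonoidHom.comp_apply, QuotientGroup.mk'_apply,
    QuotientGroup.eq_one_iff, Subgroup.mem_center_iff] at hx
  exact step' (hx (π g)).symm

open scoped commutatorElement in
theorem cmt_mem_commutator {G : Type*} [Group G] (x g : G) : cmt x g ∈ commutator G := by
  have : cmt x g = ⁅x⁻¹, g⁻¹⁆ := by simp [cmt, commutatorElement_def]
  rw [this, commutator_def]
  exact Subgroup.commutator_mem_commutator (Subgroup.mem_top _) (Subgroup.mem_top _)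

theorem N34_cmt_cmt_eq_one {x : N34} (hx : x ∈ commutator N34) (g h : N34) :
    cmt (cmt x g) h = 1 :=
  cmt_eq_one_iff.2 (Subgroup.mem_center_iff.1 (N34_cmt_mem_center hx g) h).symm

/-! ### The trilinear map `(x, g, h) ↦ [[x, g], h]` -/

theorem N34_cmt_mul_left {p q : N34} (hp : p ∈ commutator N34) (h : N34) :
    cmt (p * q) h = cmt p h * cmt q h := by
  have e : cmt (p * q) h = q⁻¹ * (cmt p h * q) * cmt q h := by simp [cmt, mul_assoc]
  rw [e, ← Subgroup.mem_center_iff.1 (N34_cmt_mem_center hp h) q, inv_mul_cancel_left]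

theorem N34_cmt_mul_right {p : N34} (hp : p ∈ commutator N34) (g h : N34) :
    cmt p (g * h) = cmt p g * cmt p h := by
  have e : cmt p (g * h) = cmt p h * (h⁻¹ * (cmt p g * h)) := by simp [cmt, mul_assoc]
  rw [e, ← Subgroup.mem_center_iff.1 (N34_cmt_mem_center hp g) h, inv_mul_cancel_left,
    Subgroup.mem_center_iff.1 (N34_cmt_mem_center hp g)]

theorem N34_tri_left (x y g h : N34) :
    cmt (cmt (x * y) g) h = cmt (cmt x g) h * cmt (cmt y g) h := by
  have e : cmt (x * y) g = cmt x g * cmt (cmt x g) y * cmt y g := by simp [cmt, mul_assoc]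
  have hx := cmt_mem_commutator x g
  rw [e, N34_cmt_mul_left (mul_mem hx (cmt_mem_commutator _ _)), N34_cmt_mul_left hx,
    N34_cmt_cmt_eq_one hx, mul_one]

theorem N34_tri_mid (x g g' h : N34) :
    cmt (cmt x (g * g')) h = cmt (cmt x g) h * cmt (cmt x g') h := by
  have e : cmt x (g * g') = cmt x g' * (cmt x g * cmt (cmt x g) g') := by simp [cmt, mul_assoc]
  have hx := cmt_mem_commutator x g
  rw [e, N34_cmt_mul_left (cmt_mem_commutator _ _), N34_cmt_mul_left hx,
    N34_cmt_cmt_eq_one hx, mul_one,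
    Subgroup.mem_center_iff.1 (N34_cmt_mem_center hx h)]

theorem N34_tri_pow (x g h : N34) (k : ℕ) :
    cmt (cmt x (g ^ k)) (h ^ k) = cmt (cmt x g) h ^ (k * k) := by
  have h1 : ∀ p ∈ commutator N34, cmt p (h ^ k) = cmt p h ^ k := fun p hp =>
    map_pow (MonoidHom.mk' (fun t => cmt p t) (N34_cmt_mul_right hp)) h k
  have h2 : ∀ r, cmt (cmt x (g ^ k)) r = cmt (cmt x g) r ^ k := fun r =>
    map_pow (MonoidHom.mk' (fun t => cmt (cmt x t) r) (fun s t => N34_tri_mid x s t r)) g k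
  rw [h2, h1 _ (cmt_mem_commutator _ _), pow_mul]

theorem N34_tri_zpow (x g h : N34) (i : ℤ) :
    cmt (cmt (x ^ i) g) h = cmt (cmt x g) h ^ i :=
  map_zpow (MonoidHom.mk' (fun t => cmt (cmt t g) h) (fun s t => N34_tri_left s t g h)) x i

/-! ### Matrix representations of `N_{3,4}` -/

theorem cmt_eq_of_mul_eq {G : Type*} [Group G] {x y w : G} (h : x * y = y * x * w) :
    cmt x y = w := by
  rw [cmt, mul_assoc, h]; simp [mul_assoc]

theorem map_cmt {G M : Type*} [Group G] [Group M] (φ : G →* M) (x y : G) :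
    φ (cmt x y) = cmt (φ x) (φ y) := by
  simp [cmt]

/-- A criterion for four elements `A, B, C, D` of a group to define a homomorphism from `N_{3,4}`,
in the case where `[[a, c], b]` and `[[a, d], b]` are sent to `1`. The elements `P, Q, R, T` are
the images of `[a, c]`, `[a, d]`, `[b, c]`, `[b, d]`, and `S, Z, V` those of `[c, d]`, `[a, b]`,
`[a, [a, d]]`. Every condition is an identity between products, so that no inverse has to be
computed in order to verify it. -/
theorem N34_exists_hom {M : Type*} [Group M] (A B C D P Q R T S Z V : M)
    (h1 : A * B = B * A * Z ∧ A * C = C * A * P ∧ A * D = D * A * Q ∧ B * C = C * B * R ∧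
      B * D = D * B * T ∧ C * D = D * C * S)
    (h2 : A * Q = Q * A * V ∧ R * C = C * R * V ∧ A * P = P * A * S ∧ B * T = T * B * S ∧
      P * C = C * P * Z ∧ T * C = C * T * Z)
    (h3 : A * Z = Z * A ∧ Z * B = B * Z ∧ A * S = S * A ∧ B * S = S * B ∧ C * S = S * C ∧
      S * D = D * S)
    (h4 : Q * D = D * Q ∧ Q * B = B * Q ∧ Q * C = C * Q ∧ B * R = R * B ∧ A * R = R * A ∧
      P * B = B * P ∧ A * T = T * A ∧ T * D = D * T) :
    ∃ φ : N34 →* M, φ (cmt ga gb) = Z ∧ φ (cmt gc gd) = S ∧ φ (cmt ga (cmt ga gd)) = V := by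
  obtain ⟨AB, AC, AD, BC, BD, CD⟩ := h1
  obtain ⟨AQ, RC, AP, BT, PC, TC⟩ := h2
  obtain ⟨AZ, ZB, AS, BS, CS, SD⟩ := h3
  obtain ⟨QD, QB, QC, BR, AR, PB, AT, TD⟩ := h4
  replace AB := cmt_eq_of_mul_eq AB
  replace AC := cmt_eq_of_mul_eq AC
  replace AD := cmt_eq_of_mul_eq AD
  replace BC := cmt_eq_of_mul_eq BC
  replace BD := cmt_eq_of_mul_eq BD
  replace CD := cmt_eq_of_mul_eq CD
  replace AQ := cmt_eq_of_mul_eq AQ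
  have hrel : ∀ r ∈ N34Rels, FreeGroup.lift ![A, B, C, D] r = 1 := by
    simp only [N34Rels, Set.mem_insert_iff, Set.mem_singleton_iff, forall_eq_or_imp, forall_eq,
      map_mul, map_inv, map_cmt, FreeGroup.lift_apply_of, Matrix.cons_val, AB, AC, AD, BC, BD, CD,
      AQ, cmt_eq_of_mul_eq RC, cmt_eq_of_mul_eq AP, cmt_eq_of_mul_eq BT, cmt_eq_of_mul_eq PC,
      cmt_eq_of_mul_eq TC, cmt_eq_one_iff.2 AZ, cmt_eq_one_iff.2 ZB, cmt_eq_one_iff.2 AS,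
      cmt_eq_one_iff.2 BS, cmt_eq_one_iff.2 CS, cmt_eq_one_iff.2 SD, cmt_eq_one_iff.2 QD,
      cmt_eq_one_iff.2 QB, cmt_eq_one_iff.2 QC, cmt_eq_one_iff.2 BR, cmt_eq_one_iff.2 AR,
      cmt_eq_one_iff.2 PB, cmt_eq_one_iff.2 AT, cmt_eq_one_iff.2 TD, mul_inv_cancel, mul_one,
      inv_one, and_self]
  have ea : PresentedGroup.toGroup hrel ga = A := PresentedGroup.toGroup.of hrel
  have eb : PresentedGroup.toGroup hrel gb = B := PresentedGroup.toGroup.of hrel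
  have ec : PresentedGroup.toGroup hrel gc = C := PresentedGroup.toGroup.of hrel
  have ed : PresentedGroup.toGroup hrel gd = D := PresentedGroup.toGroup.of hrel
  refine ⟨PresentedGroup.toGroup hrel, ?_, ?_, ?_⟩ <;>
    simp only [map_cmt, ea, eb, ec, ed, AB, CD, AD, AQ]

/-- The unipotent matrix `1 + N` as an invertible matrix, for `N` with `N³ = 0`. -/
def uni {n : ℕ} (N : Matrix (Fin n) (Fin n) ℤ) (h : N * N * N = 0) :
    (Matrix (Fin n) (Fin n) ℤ)ˣ where
  val := 1 + N
  inv := 1 - N + N * N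
  val_inv := by
    have : (1 + N) * (1 - N + N * N) = 1 + N * N * N := by noncomm_ring
    rw [this, h, add_zero]
  inv_val := by
    have : (1 - N + N * N) * (1 + N) = 1 + N * N * N := by noncomm_ring
    rw [this, h, add_zero]

/-- An elementary matrix `1 + E_{ij}` with `i ≠ j` has infinite order. -/
theorem uni_single_zpow {n : ℕ} {i j : Fin n} (hij : i ≠ j)
    (h : Matrix.single i j (1 : ℤ) * Matrix.single i j 1 * Matrix.single i j 1 = 0) (p : ℤ)
    (hp : uni (Matrix.single i j 1) h ^ p = 1) : p = 0 := by
  have hN : Matrix.single i j (1 : ℤ) * Matrix.single i j 1 = 0 := by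
    simp [hij.symm]
  have hpow : ∀ r : ℕ, (1 + Matrix.single i j (1 : ℤ)) ^ r = 1 + r • Matrix.single i j 1 := by
    intro r
    induction r with
    | zero => simp
    | succ r ih =>
      rw [pow_succ, ih, mul_add, mul_one, add_mul, one_mul, smul_mul_assoc, hN, smul_zero, add_zero,
        succ_nsmul, add_assoc]
  have hfin : ¬ IsOfFinOrder (uni (Matrix.single i j 1) h) := by
    rw [isOfFinOrder_iff_pow_eq_one]
    rintro ⟨r, hr, e⟩
    have e0 : (1 + Matrix.single i j (1 : ℤ)) ^ r = 1 := by
      have e0 := congrArg Units.val e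
      rwa [Units.val_pow_eq_pow_val] at e0
    rw [hpow, add_eq_left] at e0
    have e1 := congrFun (congrFun e0 i) j
    simp at e1
    omega
  exact injective_zpow_iff_not_isOfFinOrder.2 hfin (by simpa using hp)

section

open Matrix (single)

/-- A representation in which `[a, [a, d]]` is an elementary matrix while `[a, b]` and `[c, d]`
act trivially. -/
theorem N34_hom_v : ∃ φ : N34 →* (Matrix (Fin 6) (Fin 6) ℤ)ˣ,
    φ (cmt ga gb) = 1 ∧ φ (cmt gc gd) = 1 ∧
    φ (cmt ga (cmt ga gd)) = uni (single 0 5 1) (by decide +kernel) :=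
  N34_exists_hom
    (uni (single 0 1 1 + single 1 2 1) (by decide +kernel))
    (uni (single 4 5 1) (by decide +kernel))
    (uni (single 0 3 1 + single 3 4 1) (by decide +kernel))
    (uni (single 2 5 1) (by decide +kernel))
    1
    (uni (single 0 5 (-1) + single 1 5 1) (by decide +kernel))
    (uni (single 0 5 1 + single 3 5 (-1)) (by decide +kernel))
    1 1 1
    (uni (single 0 5 1) (by decide +kernel))
    (by decide +kernel) (by decide +kernel) (by decide +kernel) (by decide +kernel)

/-- A representation in which `[c, d]` is an elementary matrix while `[a, b]` and `[a, [a, d]]`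
act trivially. -/
theorem N34_hom_s : ∃ φ : N34 →* (Matrix (Fin 7) (Fin 7) ℤ)ˣ,
    φ (cmt ga gb) = 1 ∧ φ (cmt gc gd) = uni (single 0 6 1) (by decide +kernel) ∧
    φ (cmt ga (cmt ga gd)) = 1 :=
  N34_exists_hom
    (uni (single 0 1 1 + single 1 2 1) (by decide +kernel))
    (uni (single 0 3 1 + single 3 4 1) (by decide +kernel))
    (uni (single 0 5 1 + single 2 6 1) (by decide +kernel))
    (uni (single 4 6 1 + single 5 6 1) (by decide +kernel))
    (uni (single 0 6 (-1) + single 1 6 1) (by decide +kernel))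
    1 1
    (uni (single 0 6 (-1) + single 3 6 1) (by decide +kernel))
    (uni (single 0 6 1) (by decide +kernel))
    1 1
    (by decide +kernel) (by decide +kernel) (by decide +kernel) (by decide +kernel)

/-- A representation in which `[a, b]` is an elementary matrix while `[c, d]` and `[a, [a, d]]`
act trivially. -/
theorem N34_hom_z : ∃ φ : N34 →* (Matrix (Fin 8) (Fin 8) ℤ)ˣ,
    φ (cmt ga gb) = uni (single 0 7 1) (by decide +kernel) ∧ φ (cmt gc gd) = 1 ∧
    φ (cmt ga (cmt ga gd)) = 1 :=
  N34_exists_hom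
    (uni (single 0 1 1 + single 0 6 1) (by decide +kernel))
    (uni (single 0 3 1 + single 6 7 1) (by decide +kernel))
    (uni (single 1 2 1 + single 2 7 1 + single 3 4 1 + single 5 7 1) (by decide +kernel))
    (uni (single 3 5 1 + single 4 7 1) (by decide +kernel))
    (uni (single 0 2 1) (by decide +kernel))
    1
    (uni (single 0 4 1) (by decide +kernel))
    (uni (single 0 5 1) (by decide +kernel))
    1
    (uni (single 0 7 1) (by decide +kernel))
    1
    (by decide +kernel) (by decide +kernel) (by decide +kernel) (by decide +kernel)

end

theorem N34_z_v_independent {p q : ℤ} {r : ℕ} (hr : r ≠ 0)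
    (h : (cmt ga gb ^ p * cmt ga (cmt ga gd) ^ q) ^ r = 1) : p = 0 ∧ q = 0 := by
  obtain ⟨φ, zφ, -, vφ⟩ := N34_hom_z
  obtain ⟨ψ, zψ, -, vψ⟩ := N34_hom_v
  have hr : (r : ℤ) ≠ 0 := by exact_mod_cast hr
  constructor
  · have e := congrArg φ h
    rw [map_pow, map_mul, map_zpow, map_zpow, zφ, vφ, one_zpow, mul_one, map_one, ← zpow_natCast,
      ← zpow_mul] at e
    exact (mul_eq_zero_iff_right hr).1 (uni_single_zpow (by decide) _ _ e)
  · have e := congrArg ψ h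
    rw [map_pow, map_mul, map_zpow, map_zpow, zψ, vψ, one_zpow, one_mul, map_one, ← zpow_natCast,
      ← zpow_mul] at e
    exact (mul_eq_zero_iff_right hr).1 (uni_single_zpow (by decide) _ _ e)

theorem N34_s_v_independent {p q : ℤ} {r : ℕ} (hr : r ≠ 0)
    (h : (cmt gc gd ^ p * cmt ga (cmt ga gd) ^ q) ^ r = 1) : p = 0 ∧ q = 0 := by
  obtain ⟨φ, -, sφ, vφ⟩ := N34_hom_s
  obtain ⟨ψ, -, sψ, vψ⟩ := N34_hom_v
  have hr : (r : ℤ) ≠ 0 := by exact_mod_cast hr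
  constructor
  · have e := congrArg φ h
    rw [map_pow, map_mul, map_zpow, map_zpow, sφ, vφ, one_zpow, mul_one, map_one, ← zpow_natCast,
      ← zpow_mul] at e
    exact (mul_eq_zero_iff_right hr).1 (uni_single_zpow (by decide) _ _ e)
  · have e := congrArg ψ h
    rw [map_pow, map_mul, map_zpow, map_zpow, sψ, vψ, one_zpow, one_mul, map_one, ← zpow_natCast,
      ← zpow_mul] at e
    exact (mul_eq_zero_iff_right hr).1 (uni_single_zpow (by decide) _ _ e)

/-! ### The kernel of a virtual endomorphism with singular exponent matrix -/

/-- The value of `[[-, c], c]` on a product of powers of the generators. -/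
theorem N34_tri_c (p q r t : ℤ) :
    cmt (cmt (ga ^ p * gb ^ q * gc ^ r * gd ^ t) gc) gc =
      cmt ga gb ^ p * cmt ga (cmt ga gd) ^ q := by
  obtain ⟨⟨hs, -⟩, -, hz, hv, -⟩ := N34_structure
  have hc : cmt (cmt gc gc) gc = 1 := by simp [cmt]
  have hd : cmt (cmt gd gc) gc = 1 := by
    rw [cmt_eq_one_iff, ← cmt_inv gc gd]
    exact Commute.inv_left (Subgroup.mem_center_iff.1 hs gc).symm
  simp only [N34_tri_left, N34_tri_zpow, hz, hv, hc, hd, one_zpow, mul_one]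

/-- The value of `[[-, a], a]` on a product of powers of the generators. -/
theorem N34_tri_a (p q r t : ℤ) :
    cmt (cmt (ga ^ p * gb ^ q * gc ^ r * gd ^ t) ga) ga =
      cmt gc gd ^ r * cmt ga (cmt ga gd) ^ t := by
  obtain ⟨⟨-, hz⟩, -, -, -, hs⟩ := N34_structure
  have ha : cmt (cmt ga ga) ga = 1 := by simp [cmt]
  have hb : cmt (cmt gb ga) ga = 1 := by
    rw [cmt_eq_one_iff, ← cmt_inv ga gb]
    exact Commute.inv_left (Subgroup.mem_center_iff.1 hz ga).symm
  -- `[x⁻¹, a] = [a, x]` because `[x, a]` is central for `x` in the commutator subgroup.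
  have swap : ∀ g, cmt (cmt g ga) ga = cmt ga (cmt ga g) := fun g => by
    have hx := cmt_mem_commutator ga g
    have e : cmt (cmt ga g * (cmt ga g)⁻¹) ga = 1 := by simp [cmt]
    rw [N34_cmt_mul_left hx, mul_eq_one_iff_inv_eq, cmt_inv, cmt_inv] at e
    exact e.symm
  simp only [N34_tri_left, N34_tri_zpow, ha, hb, swap gc, swap gd, hs, one_zpow, mul_one, one_mul]

/-- If `x ∈ K` has image in the commutator subgroup, then `[[x, g], g]` with `g ∈ K` is a central
element of `K` in the kernel of `f`; when it is nontrivial it generates a subgroup as wanted. -/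
theorem N34_witness {H K : Subgroup N34} (f : H →* N34) (hKH : K ≤ H) {x g : N34} (hx : x ∈ K)
    (hg : g ∈ K) (hfx : f ⟨x, hKH hx⟩ ∈ commutator N34) (hne : cmt (cmt x g) g ≠ 1) :
    ∃ W : Subgroup N34, W ≠ ⊥ ∧ W ≤ K ∧ W.Normal ∧ W.subgroupOf H ≤ f.ker := by
  have cmt_mem : ∀ {y h : N34}, y ∈ K → h ∈ K → cmt y h ∈ K := fun hy hh =>
    mul_mem (mul_mem (mul_mem (inv_mem hy) (inv_mem hh)) hy) hh
  have hw := cmt_mem (cmt_mem hx hg) hg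
  have hcen := N34_cmt_mem_center (cmt_mem_commutator x g) g
  have hf : f ⟨cmt (cmt x g) g, hKH hw⟩ = 1 := by
    have e : (⟨cmt (cmt x g) g, hKH hw⟩ : H) =
        cmt (cmt ⟨x, hKH hx⟩ ⟨g, hKH hg⟩) ⟨g, hKH hg⟩ := rfl
    rw [e, map_cmt, map_cmt, N34_cmt_cmt_eq_one hfx]
  refine ⟨Subgroup.zpowers (cmt (cmt x g) g), by simpa using hne, by simpa using hw,
    ⟨fun y hy g => ?_⟩, ?_⟩
  · have hyc : y ∈ Subgroup.center N34 := (Subgroup.zpowers_le.2 hcen) hy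
    rwa [Subgroup.mem_center_iff.1 hyc g, mul_inv_cancel_right]
  rintro ⟨y, hy⟩ hyW
  obtain ⟨i, rfl⟩ := Subgroup.mem_zpowers_iff.1 (Subgroup.mem_subgroupOf.1 hyW)
  have e : (⟨cmt (cmt x g) g ^ i, hy⟩ : H) = ⟨cmt (cmt x g) g, hKH hw⟩ ^ i := rfl
  rw [MonoidHom.mem_ker, e, map_zpow, hf, one_zpow]

/-- Let `f : H → N_{3,4}` be a virtual endomorphism of `G = N_{3,4}`, let
`K = ⟨aᵐ, bⁿ, cᵏ, dʲ⟩ ≤ H`, and let `Nf` be the `4 × 4` integer exponent matrix of `f`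
(recording the images of `aᵐ, bⁿ, cᵏ, dʲ` modulo `G'`). If `det Nf = 0`, then there is a
nontrivial subgroup `W ≤ K`, normal in `N_{3,4}`, contained in the kernel of `f`. -/
theorem N34_kernel_witness_of_det_eq_zero
    (H : Subgroup N34) (hH : H.FiniteIndex) (f : ↥H →* N34)
    (m n k j : ℕ) (hm : 0 < m) (hn : 0 < n) (hk : 0 < k) (hj : 0 < j)
    (ham : ga ^ m ∈ H) (hbn : gb ^ n ∈ H) (hck : gc ^ k ∈ H) (hdj : gd ^ j ∈ H)
    (K : Subgroup N34)
    (hK : K = Subgroup.closure {ga ^ m, gb ^ n, gc ^ k, gd ^ j})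
    (hKH : K ≤ H)
    (Nf : Matrix (Fin 4) (Fin 4) ℤ)
    (hfa : f ⟨ga ^ m, ham⟩ *
      (ga ^ Nf 0 0 * gb ^ Nf 0 1 * gc ^ Nf 0 2 * gd ^ Nf 0 3)⁻¹ ∈ commutator N34)
    (hfb : f ⟨gb ^ n, hbn⟩ *
      (ga ^ Nf 1 0 * gb ^ Nf 1 1 * gc ^ Nf 1 2 * gd ^ Nf 1 3)⁻¹ ∈ commutator N34)
    (hfc : f ⟨gc ^ k, hck⟩ *
      (ga ^ Nf 2 0 * gb ^ Nf 2 1 * gc ^ Nf 2 2 * gd ^ Nf 2 3)⁻¹ ∈ commutator N34)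
    (hfd : f ⟨gd ^ j, hdj⟩ *
      (ga ^ Nf 3 0 * gb ^ Nf 3 1 * gc ^ Nf 3 2 * gd ^ Nf 3 3)⁻¹ ∈ commutator N34)
    (hdet : Nf.det = 0) :
    ∃ W : Subgroup N34, W ≠ ⊥ ∧ W ≤ K ∧ W.Normal ∧ W.subgroupOf H ≤ f.ker := by
  obtain ⟨e, he, heN⟩ := Matrix.exists_vecMul_eq_zero_iff.2 hdet
  have hmemK : ga ^ m ∈ K ∧ gb ^ n ∈ K ∧ gc ^ k ∈ K ∧ gd ^ j ∈ K := by
    subst hK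
    refine ⟨?_, ?_, ?_, ?_⟩ <;> exact Subgroup.subset_closure (by simp)
  obtain ⟨hKa, hKb, hKc, hKd⟩ := hmemK
  have hx : (ga ^ m) ^ e 0 * (gb ^ n) ^ e 1 * (gc ^ k) ^ e 2 * (gd ^ j) ^ e 3 ∈ K :=
    mul_mem (mul_mem (mul_mem (zpow_mem hKa _) (zpow_mem hKb _)) (zpow_mem hKc _))
      (zpow_mem hKd _)
  have hfx : f ⟨_, hKH hx⟩ ∈ commutator N34 := by
    have hof : ∀ y : N34, y ∈ commutator N34 ↔ Abelianization.of y = 1 := fun y => by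
      rw [← Abelianization.ker_of, MonoidHom.mem_ker]
    rw [hof] at hfa hfb hfc hfd ⊢
    simp only [map_mul, map_inv, map_zpow, mul_inv_eq_one] at hfa hfb hfc hfd
    have hsplit : (⟨_, hKH hx⟩ : H) = (⟨ga ^ m, ham⟩ : H) ^ e 0 * (⟨gb ^ n, hbn⟩ : H) ^ e 1 *
        (⟨gc ^ k, hck⟩ : H) ^ e 2 * (⟨gd ^ j, hdj⟩ : H) ^ e 3 := rfl
    -- The exponents of the four generators in the abelianization are the entries of `e ᵥ* Nf`.
    have hcol : ∀ i, e 0 * Nf 0 i + e 1 * Nf 1 i + e 2 * Nf 2 i + e 3 * Nf 3 i = 0 := fun i => by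
      have := congrFun heN i
      simpa [Matrix.vecMul, dotProduct, Fin.sum_univ_four] using this
    have hpow : ∀ (y : Abelianization N34) (i : Fin 4),
        (y ^ Nf 0 i) ^ e 0 * (y ^ Nf 1 i) ^ e 1 * (y ^ Nf 2 i) ^ e 2 * (y ^ Nf 3 i) ^ e 3 = 1 := by
      intro y i
      rw [← zpow_mul, ← zpow_mul, ← zpow_mul, ← zpow_mul, ← zpow_add, ← zpow_add, ← zpow_add,
        mul_comm, mul_comm (Nf 1 i), mul_comm (Nf 2 i), mul_comm (Nf 3 i), hcol, zpow_zero]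
    rw [hsplit]
    simp only [map_mul, map_zpow, hfa, hfb, hfc, hfd, mul_zpow]
    have hprod := congrArg₂ (· * ·)
      (congrArg₂ (· * ·) (hpow (Abelianization.of ga) 0) (hpow (Abelianization.of gb) 1))
      (congrArg₂ (· * ·) (hpow (Abelianization.of gc) 2) (hpow (Abelianization.of gd) 3))
    simp only [one_mul] at hprod
    refine Eq.trans ?_ hprod
    ac_rfl
  by_cases hc : cmt (cmt ((ga ^ m) ^ e 0 * (gb ^ n) ^ e 1 * (gc ^ k) ^ e 2 * (gd ^ j) ^ e 3)
      (gc ^ k)) (gc ^ k) = 1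
  swap
  · exact N34_witness f hKH hx hKc hfx hc
  by_cases ha : cmt (cmt ((ga ^ m) ^ e 0 * (gb ^ n) ^ e 1 * (gc ^ k) ^ e 2 * (gd ^ j) ^ e 3)
      (ga ^ m)) (ga ^ m) = 1
  swap
  · exact N34_witness f hKH hx hKa hfx ha
  -- If both double commutators vanish, then every coordinate of `e` is zero.
  exfalso
  have hmz : (m : ℤ) ≠ 0 := by exact_mod_cast hm.ne'
  have hnz : (n : ℤ) ≠ 0 := by exact_mod_cast hn.ne'
  have hkz : (k : ℤ) ≠ 0 := by exact_mod_cast hk.ne'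
  have hjz : (j : ℤ) ≠ 0 := by exact_mod_cast hj.ne'
  simp only [← zpow_natCast ga m, ← zpow_natCast gb n, ← zpow_natCast gc k, ← zpow_natCast gd j,
    ← zpow_mul] at hc ha
  rw [zpow_natCast gc k, N34_tri_pow, N34_tri_c] at hc
  rw [zpow_natCast ga m, N34_tri_pow, N34_tri_a] at ha
  obtain ⟨h0, h1⟩ := N34_z_v_independent (mul_pos hk hk).ne' hc
  obtain ⟨h2, h3⟩ := N34_s_v_independent (mul_pos hm hm).ne' ha
  refine he (funext fun i => ?_)
  fin_cases i
  · exact (mul_eq_zero_iff_left hmz).1 h0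
  · exact (mul_eq_zero_iff_left hnz).1 h1
  · exact (mul_eq_zero_iff_left hkz).1 h2
  · exact (mul_eq_zero_iff_left hjz).1 h3
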